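/- If a vector field v : ℝ^m → ℝ^m is continuous and satisfies v(d) · d ≥ 0 for all d with ‖d‖ = r (for some r > 0), then there exists a point d with ‖d‖ ≤ r such that v(d) = 0. -/

import Mathlib

open scoped RealInnerProductSpace

open Set Metric MeasureTheory

section Perturbation

variable {E : Type*} [NormedAddCommGroup E] [NormedSpace ℝ E]

theorem LipschitzOnWith.indicator_closedBall {g : E → E} {R : ℝ} {K : NNReal}
    (hg : LipschitzOnWith K g (closedBall 0 R)) (h0 : ∀ x, ‖x‖ = R → g x = 0) :
    LipschitzWith K ((closedBall (0 : E) R).indicator g) := by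
  have key : ∀ x ∈ closedBall (0 : E) R, ∀ y ∉ closedBall (0 : E) R,
      dist (g x) 0 ≤ K * dist x y := by
    intro x hx y hy
    have hpath : ContinuousOn (fun z : E => ‖z‖) (segment ℝ x y) := continuous_norm.continuousOn
    obtain ⟨z, hz, hzR⟩ := (convex_segment x y).isPreconnected.intermediate_value
      (left_mem_segment ℝ x y) (right_mem_segment ℝ x y) hpath
      (show R ∈ Icc ‖x‖ ‖y‖ from
        ⟨by simpa using hx, (not_le.1 (by simpa using hy)).le⟩)
    have hzR : ‖z‖ = R := hzR
    have hzB : z ∈ closedBall (0 : E) R := by simp [hzR]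
    calc dist (g x) 0 = dist (g x) (g z) := by rw [h0 z hzR]
      _ ≤ K * dist x z := hg.dist_le_mul x hx z hzB
      _ ≤ K * dist x y := by
        have := dist_add_dist_of_mem_segment hz
        gcongr
        linarith [dist_nonneg (x := z) (y := y)]
  refine LipschitzWith.of_dist_le_mul fun x y => ?_
  by_cases hx : x ∈ closedBall (0 : E) R <;> by_cases hy : y ∈ closedBall (0 : E) R
  · simpa [hx, hy] using hg.dist_le_mul x hx y hy
  · simpa only [indicator_of_mem hx, indicator_of_notMem hy] using key x hx y hy
  · simpa only [indicator_of_mem hy, indicator_of_notMem hx, dist_comm] using key y hy x hx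
  · simp only [indicator_of_notMem hx, indicator_of_notMem hy, dist_self]
    positivity

theorem LipschitzWith.bijective_id_add [CompleteSpace E] {g : E → E} {K : NNReal}
    (hg : LipschitzWith K g) (hK : K < 1) : Function.Bijective fun x => x + g x := by
  rcases subsingleton_or_nontrivial E with h | h
  · exact ⟨fun _ _ _ => Subsingleton.elim _ _, fun y => ⟨y, Subsingleton.elim _ _⟩⟩
  have happ : ApproximatesLinearOn (fun x => x + g x)
      ((ContinuousLinearEquiv.refl ℝ E : E ≃L[ℝ] E) : E →L[ℝ] E) univ K := by
    rw [ApproximatesLinearOn.approximatesLinearOn_iff_lipschitzOnWith, lipschitzOnWith_univ]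
    convert hg using 1
    ext x
    simp
  have hN : K < ‖((ContinuousLinearEquiv.refl ℝ E).symm : E →L[ℝ] E)‖₊⁻¹ := by
    simpa using hK
  exact ⟨injOn_univ.1 (happ.injOn (Or.inr hN)), happ.surjective (Or.inr hN)⟩

/-- A small Lipschitz perturbation of the identity that is supported in a ball permutes
that ball. -/
theorem LipschitzOnWith.bijOn_ball_id_add [CompleteSpace E] {g : E → E} {R : ℝ} {K : NNReal}
    (hg : LipschitzOnWith K g (closedBall 0 R)) (h0 : ∀ x, ‖x‖ = R → g x = 0) (hK : K < 1) :
    BijOn (fun x => x + g x) (ball 0 R) (ball 0 R) := by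
  set G := (closedBall (0 : E) R).indicator g with hG
  have hbij := (hg.indicator_closedBall h0).bijective_id_add hK
  have hout : ∀ x ∉ ball (0 : E) R, G x = 0 := by
    intro x hx
    by_cases hxR : ‖x‖ = R
    · simp [hG, indicator, h0 x hxR]
    · refine indicator_of_notMem (fun hx' => hx ?_) _
      simp only [mem_closedBall_zero_iff] at hx'
      simpa using lt_of_le_of_ne hx' hxR
  have hcompl : (fun x => x + G x) '' (ball 0 R)ᶜ = (ball 0 R)ᶜ := by
    rw [image_congr (g := id) fun x hx => by simp [hout x hx], image_id]
  have himage : (fun x => x + G x) '' ball 0 R = ball 0 R := by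
    rw [image_compl_eq hbij] at hcompl
    exact compl_injective hcompl
  have hBij : BijOn (fun x => x + G x) (ball 0 R) (ball 0 R) := by
    have := hbij.injective.injOn.bijOn_image (s := ball (0 : E) R)
    rwa [himage] at this
  refine hBij.congr fun x hx => ?_
  simp [hG, indicator_of_mem (ball_subset_closedBall hx)]

end Perturbation

section Determinant

variable {E : Type*} [NormedAddCommGroup E] [NormedSpace ℝ E]

theorem ContinuousLinearMap.exists_forall_det_id_add_smul_pos (C : ℝ) :
    ∃ ε > 0, ∀ t : ℝ, |t| < ε → ∀ A : E →L[ℝ] E, ‖A‖ ≤ C →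
      0 < (ContinuousLinearMap.id ℝ E + t • A).det := by
  have hcont : Continuous fun A : E →L[ℝ] E => A.det := ContinuousLinearMap.continuous_det
  have hmem : {A : E →L[ℝ] E | 0 < A.det} ∈ nhds (ContinuousLinearMap.id ℝ E) :=
    (isOpen_lt continuous_const hcont).mem_nhds (by simp [ContinuousLinearMap.det])
  obtain ⟨δ, hδ, hball⟩ := Metric.mem_nhds_iff.1 hmem
  refine ⟨δ / (|C| + 1), by positivity, fun t ht A hA => hball ?_⟩
  rw [lt_div_iff₀ (by positivity)] at ht
  rw [mem_ball, dist_eq_norm, add_sub_cancel_left, norm_smul, Real.norm_eq_abs]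
  refine lt_of_le_of_lt ?_ ht
  gcongr
  linarith [le_abs_self C]

theorem ContinuousLinearMap.exists_polynomial_eval_eq_det_id_add_smul [FiniteDimensional ℝ E]
    (A : E →L[ℝ] E) :
    ∃ p : Polynomial ℝ, p.natDegree ≤ Module.finrank ℝ E ∧
      ∀ t : ℝ, p.eval t = (ContinuousLinearMap.id ℝ E + t • A).det := by
  let b := Module.finBasis ℝ E
  let M := LinearMap.toMatrix b b (A : E →ₗ[ℝ] E)
  refine ⟨_, (Polynomial.natDegree_det_X_add_C_le M 1).trans (by simp), fun t => ?_⟩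
  rw [← Polynomial.coe_evalRingHom, RingHom.map_det, ContinuousLinearMap.det,
    ← LinearMap.det_toMatrix b]
  congr 1
  ext i j
  rcases eq_or_ne i j with rfl | hij
  · simp [M, LinearMap.toMatrix_apply]
    ring
  · simp [M, LinearMap.toMatrix_apply, hij]
    ring

end Determinant

section NoRetraction

variable {E : Type*} [NormedAddCommGroup E] [NormedSpace ℝ E] [FiniteDimensional ℝ E]
  [MeasurableSpace E] [BorelSpace E]

theorem integral_det_id_add_fderiv_eq_volume_ball (μ : Measure E) [μ.IsAddHaarMeasure]
    {g : E → E} {R : ℝ} {K : NNReal}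
    (hg : LipschitzOnWith K g (closedBall 0 R)) (hd : DifferentiableOn ℝ g (ball 0 R))
    (h0 : ∀ x, ‖x‖ = R → g x = 0) :
    ∫ x in ball 0 R, (ContinuousLinearMap.id ℝ E + fderiv ℝ g x).det ∂μ = μ.real (ball 0 R) := by
  obtain ⟨ε, hε, hdet⟩ := ContinuousLinearMap.exists_forall_det_id_add_smul_pos (E := E) K
  have hnorm : ∀ x ∈ ball (0 : E) R, ‖fderiv ℝ g x‖ ≤ K := fun x hx =>
    norm_fderiv_le_of_lipschitzOn ℝ (closedBall_mem_nhds_of_mem hx) hg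
  set D : ℝ → E → ℝ := fun t x => (ContinuousLinearMap.id ℝ E + t • fderiv ℝ g x).det with hD
  have hsmall : ∀ t : ℝ, 0 < t → t < ε → t * K < 1 →
      IntegrableOn (D t) (ball 0 R) μ ∧ ∫ x in ball 0 R, D t x ∂μ = μ.real (ball 0 R) := by
    intro t ht htε htK
    have hbij : BijOn (fun x => x + t • g x) (ball 0 R) (ball 0 R) := by
      refine LipschitzOnWith.bijOn_ball_id_add (K := t.toNNReal * K) ?_
        (fun x hx => by simp [h0 x hx]) 
        (by rwa [← NNReal.coe_lt_coe, NNReal.coe_mul, Real.coe_toNNReal t ht.le])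
      refine LipschitzOnWith.of_dist_le_mul fun x hx y hy => ?_
      rw [dist_smul₀, Real.norm_eq_abs, abs_of_pos ht, NNReal.coe_mul,
        Real.coe_toNNReal t ht.le, mul_assoc]
      exact mul_le_mul_of_nonneg_left (hg.dist_le_mul x hx y hy) ht.le
    have hder : ∀ x ∈ ball (0 : E) R, HasFDerivWithinAt (fun x => x + t • g x)
        (ContinuousLinearMap.id ℝ E + t • fderiv ℝ g x) (ball 0 R) x := fun x hx =>
      ((hasFDerivAt_id x).add (((hd x hx).differentiableAt
        (isOpen_ball.mem_nhds hx)).hasFDerivAt.const_smul t)).hasFDerivWithinAt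
    have habs : EqOn (fun x => |D t x| • (1 : ℝ)) (D t) (ball 0 R) := fun x hx => by
      simp [D, abs_of_pos (hdet t (by rwa [abs_of_pos ht]) _ (hnorm x hx))]
    constructor
    · have := (integrableOn_image_iff_integrableOn_abs_det_fderiv_smul μ measurableSet_ball hder
        hbij.injOn fun _ => (1 : ℝ)).1 (by
          rw [hbij.image_eq]; exact integrableOn_const measure_ball_lt_top.ne)
      exact this.congr_fun habs measurableSet_ball
    · have := integral_image_eq_integral_abs_det_fderiv_smul μ measurableSet_ball hder
        hbij.injOn fun _ => (1 : ℝ)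
      rw [hbij.image_eq, setIntegral_congr_fun measurableSet_ball habs] at this
      rw [← this]
      simp
  set η : ℝ := min ε (1 / (K + 1)) with hη
  have hη0 : 0 < η := by positivity
  let s := Finset.range (Module.finrank ℝ E + 1)
  let node : ℕ → ℝ := fun i => η / (i + 2)
  have hnode0 : ∀ i, 0 < node i := fun i => by positivity
  have hnode : ∀ i, node i < η := fun i => by
    apply div_lt_self hη0
    linarith [(Nat.cast_nonneg i : (0 : ℝ) ≤ i)]
  have hinj : InjOn node s := fun i _ j _ hij => by
    have h : η / ((i : ℝ) + 2) = η / (j + 2) := hij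
    field_simp at h
    exact_mod_cast (by linarith : (i : ℝ) = j)
  have hnodeD := fun i => hsmall (node i) (hnode0 i) ((hnode i).trans_le (min_le_left _ _)) (by
    have h1 : node i < 1 / (K + 1) := (hnode i).trans_le (min_le_right _ _)
    rw [lt_div_iff₀ (by positivity)] at h1
    linarith [hnode0 i])
  have hinterp : ∀ x, D 1 x = ∑ i ∈ s, D (node i) x * (Lagrange.basis s node i).eval 1 := by
    intro x
    obtain ⟨p, hp, hpD⟩ :=
      ContinuousLinearMap.exists_polynomial_eval_eq_det_id_add_smul (fderiv ℝ g x)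
    have hdeg : p.degree < s.card := by
      refine Polynomial.degree_le_natDegree.trans_lt ?_
      rw [Finset.card_range]
      exact_mod_cast Nat.lt_succ_of_le hp
    have := congrArg (Polynomial.eval 1) (Lagrange.eq_interpolate hinj hdeg)
    simpa [Lagrange.interpolate_apply, Polynomial.eval_finsetSum, hpD, D] using this
  have hone : ∑ i ∈ s, (Lagrange.basis s node i).eval 1 = 1 := by
    rw [← Polynomial.eval_finsetSum, Lagrange.sum_basis hinj (by simp [s]), Polynomial.eval_one]
  calc ∫ x in ball 0 R, (ContinuousLinearMap.id ℝ E + fderiv ℝ g x).det ∂μ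
      = ∫ x in ball 0 R, ∑ i ∈ s, D (node i) x * (Lagrange.basis s node i).eval 1 ∂μ := by
        simp_rw [← hinterp, hD, one_smul]
    _ = ∑ i ∈ s, μ.real (ball 0 R) * (Lagrange.basis s node i).eval 1 := by
        rw [integral_finsetSum _ fun i _ => (hnodeD i).1.mul_const _]
        simp_rw [integral_mul_const, (hnodeD _).2]
    _ = μ.real (ball 0 R) := by rw [← Finset.mul_sum, hone, mul_one]

end NoRetraction

section InnerProduct

variable {E : Type*} [NormedAddCommGroup E] [InnerProductSpace ℝ E] [FiniteDimensional ℝ E]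

theorem det_fderiv_eq_zero_of_norm_eventually_const {f : E → E} {x : E} {R : ℝ} (hR : 0 < R)
    (hf : DifferentiableAt ℝ f x) (hconst : ∀ᶠ y in nhds x, ‖f y‖ = R) :
    (fderiv ℝ f x).det = 0 := by
  by_contra hdet
  have hinner : ∀ h, ⟪f x, fderiv ℝ f x h⟫ = 0 := by
    intro h
    have h1 := (hf.hasFDerivAt.norm_sq)
    have h2 : HasFDerivAt (fun y => ‖f y‖ ^ 2) (0 : E →L[ℝ] ℝ) x :=
      (hasFDerivAt_const (R ^ 2) x).congr_of_eventuallyEq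
        (hconst.mono fun y hy => by simp [hy])
    have := DFunLike.congr_fun (h1.unique h2) h
    simpa using this
  have hsurj : Function.Surjective (fderiv ℝ f x) :=
    (LinearMap.equivOfDetNeZero (fderiv ℝ f x : E →ₗ[ℝ] E) hdet).surjective
  obtain ⟨h, hh⟩ := hsurj (f x)
  have := hinner h
  rw [hh, real_inner_self_eq_norm_sq, hconst.self_of_nhds] at this
  exact hR.ne' (by simpa using this)

/-- There is no `C¹` retraction of a closed ball onto its boundary sphere. -/
theorem not_contDiffOn_retraction_sphere {U : Set E} (hU : IsOpen U) {R : ℝ} (hR : 0 < R)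
    (hBU : closedBall 0 R ⊆ U) {f : E → E} (hf : ContDiffOn ℝ 1 f U)
    (hnorm : ∀ x ∈ U, ‖f x‖ = R) : ∃ x, ‖x‖ = R ∧ f x ≠ x := by
  by_contra! hid
  let _ : MeasurableSpace E := borel E
  have : BorelSpace E := ⟨rfl⟩
  let μ : Measure E := (stdOrthonormalBasis ℝ E).toBasis.addHaar
  have hg : ContDiffOn ℝ 1 (fun x => f x - x) U := hf.sub contDiffOn_id
  obtain ⟨K, hK⟩ := (hg.mono hBU).exists_lipschitzOnWith one_ne_zero (convex_closedBall 0 R)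
    (isCompact_closedBall 0 R)
  have hdiff : ∀ x ∈ ball (0 : E) R, DifferentiableAt ℝ f x := fun x hx =>
    (hf.differentiableOn one_ne_zero).differentiableAt
      (hU.mem_nhds (hBU (ball_subset_closedBall hx)))
  have hint := integral_det_id_add_fderiv_eq_volume_ball μ hK
    (fun x hx => ((hdiff x hx).sub differentiableAt_id).differentiableWithinAt)
    (fun x hx => by simp [hid x hx])
  rw [setIntegral_congr_fun (g := fun _ => (0 : ℝ)) measurableSet_ball] at hint
  · have hpos : 0 < μ.real (ball (0 : E) R) :=
      ENNReal.toReal_pos (measure_ball_pos μ 0 hR).ne' measure_ball_lt_top.ne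
    simp at hint
    linarith
  · intro x hx
    have : fderiv ℝ (fun x => f x - x) x = fderiv ℝ f x - ContinuousLinearMap.id ℝ E := by
      rw [fderiv_fun_sub (hdiff x hx) differentiableAt_fun_id, fderiv_fun_id]
    simp only [this, add_sub_cancel]
    exact det_fderiv_eq_zero_of_norm_eventually_const hR (hdiff x hx)
      (Filter.mem_of_superset (hU.mem_nhds (hBU (ball_subset_closedBall hx))) hnorm)

/-- A `C¹` vector field pointing strictly outward on a sphere vanishes inside. -/
theorem ContDiff.exists_zero_of_inner_pos {w : E → E} (hw : ContDiff ℝ 1 w) {R : ℝ} (hR : 0 < R)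
    (hpos : ∀ x, ‖x‖ = R → 0 < ⟪x, w x⟫) : ∃ x, ‖x‖ ≤ R ∧ w x = 0 := by
  by_contra! hne
  let disc : E → ℝ := fun x => ⟪x, w x⟫ ^ 2 + ‖w x‖ ^ 2 * (R ^ 2 - ‖x‖ ^ 2)
  have hin : ContDiff ℝ 1 fun x => ⟪x, w x⟫ := contDiff_id.inner ℝ hw
  have hdisc : ContDiff ℝ 1 disc :=
    (hin.pow 2).add ((hw.norm_sq ℝ).mul (contDiff_const.sub (contDiff_id.norm_sq ℝ)))
  let U : Set E := {x | 0 < disc x} ∩ {x | w x ≠ 0}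
  have hU : IsOpen U := (isOpen_lt continuous_const hdisc.continuous).inter
    (isOpen_ne_fun hw.continuous continuous_const)
  have hBU : closedBall 0 R ⊆ U := by
    intro x hx
    have hx' : ‖x‖ ≤ R := by simpa using hx
    refine ⟨?_, hne x hx'⟩
    have hw0 := norm_pos_iff.2 (hne x hx')
    rcases hx'.eq_or_lt with h | h
    · have := hpos x h
      simp only [mem_ofPred_eq, disc, h]
      simp
      positivity
    · have : 0 < R ^ 2 - ‖x‖ ^ 2 := by
        have := norm_nonneg x
        nlinarith
      simp only [mem_ofPred_eq, disc]
      positivity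
  let f : E → E := fun x => x + ((-⟪x, w x⟫ + √(disc x)) / ‖w x‖ ^ 2) • w x
  have hf : ContDiffOn ℝ 1 f U := by
    refine contDiffOn_id.add (((hin.neg.contDiffOn.add
      (hdisc.contDiffOn.sqrt fun x hx => (hx.1 : 0 < disc x).ne')).div
      (hw.norm_sq ℝ).contDiffOn fun x hx => ?_).smul hw.contDiffOn)
    exact pow_ne_zero 2 (norm_ne_zero_iff.2 hx.2)
  have hnorm : ∀ x ∈ U, ‖f x‖ = R := by
    intro x hx
    have hw0 : ‖w x‖ ≠ 0 := norm_ne_zero_iff.2 hx.2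
    have hs := Real.sq_sqrt (hx.1 : 0 < disc x).le
    have hsq : ‖f x‖ ^ 2 = R ^ 2 := by
      simp only [f, norm_add_sq_real, norm_smul, inner_smul_right, mul_pow, Real.norm_eq_abs,
        sq_abs]
      generalize √(disc x) = q at hs
      simp only [disc] at hs
      field_simp
      linear_combination hs
    exact (sq_eq_sq₀ (norm_nonneg _) hR.le).1 hsq
  obtain ⟨x, hx, hfx⟩ := not_contDiffOn_retraction_sphere hU hR hBU hf hnorm
  apply hfx
  simp [f, disc, hx, Real.sqrt_sq (hpos x hx).le]

end InnerProduct

/-- Brouwer-type zero lemma used in Evans' Galerkin construction: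
a continuous vector field on ℝ^m pointing outward on the sphere of radius `r`
has a zero in the closed ball of radius `r`. -/
theorem stmt_0 {m : ℕ} (v : EuclideanSpace ℝ (Fin m) → EuclideanSpace ℝ (Fin m))
    (hv : Continuous v) (r : ℝ) (hr : 0 < r)
    (hbd : ∀ d : EuclideanSpace ℝ (Fin m), ‖d‖ = r → 0 ≤ ⟪v d, d⟫) :
    ∃ d : EuclideanSpace ℝ (Fin m), ‖d‖ ≤ r ∧ v d = 0 := by
  by_contra! hne
  obtain ⟨x₀, hx₀, hmin⟩ := (isCompact_closedBall (0 : EuclideanSpace ℝ (Fin m)) r).exists_isMinOn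
    ⟨0, by simp [hr.le]⟩ hv.norm.continuousOn
  set δ := ‖v x₀‖ with hδ
  have hδ0 : 0 < δ := norm_pos_iff.2 (hne x₀ (by simpa using hx₀))
  set ε := δ / (2 * r) with hε
  have hε0 : 0 < ε := by positivity
  have hεr : ε * r = δ / 2 := by rw [hε]; field_simp
  have hw : Continuous fun x => v x + ε • x := by fun_prop
  obtain ⟨p, hp, hpw, -⟩ := hw.exists_contDiff_approx 1 (ε := fun _ => δ / 2)
    continuous_const (fun _ => by positivity)
  obtain ⟨x, hx, hpx⟩ := ContDiff.exists_zero_of_inner_pos hp hr fun x hx => by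
    have h1 := hbd x hx
    have h2 : |⟪x, p x - (v x + ε • x)⟫| < r * (δ / 2) := by
      refine (abs_real_inner_le_norm _ _).trans_lt ?_
      rw [hx]
      exact mul_lt_mul_of_pos_left (by simpa [dist_eq_norm] using hpw x) hr
    have h3 : ⟪x, p x⟫ = ⟪x, p x - (v x + ε • x)⟫ + ⟪v x, x⟫ + ε * r ^ 2 := by
      rw [← hx, ← real_inner_self_eq_norm_sq, inner_sub_right, inner_add_right, inner_smul_right,
        real_inner_comm x (v x)]
      ring
    have h4 : ε * r ^ 2 = r * (δ / 2) := by rw [← hεr]; ring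
    linarith [neg_lt_of_abs_lt h2]
  have h1 : δ ≤ ‖v x‖ := hmin (by simpa using hx)
  have h2 := hpw x
  rw [hpx, dist_zero_left] at h2
  have h3 : ‖v x‖ ≤ ‖v x + ε • x‖ + ‖ε • x‖ := by
    simpa using norm_sub_le (v x + ε • x) (ε • x)
  have h4 : ‖ε • x‖ ≤ δ / 2 := by
    rw [norm_smul, Real.norm_of_nonneg hε0.le, ← hεr]
    gcongr
  linarith
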